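/- Let a be a nonzero real constant, V ⊂ ℝ^{n−1} open, φ: V → ℝ real-analytic, and let Λ = {x ∈ ℝⁿ : x₁ = φ(x₂,…,x_n)} be the graph hypersurface. Then for every point p ∈ Λ there is an open neighborhood U of p and a real-analytic function v on U such that u(x) = −a·log(x₁ − φ(x₂,…,x_n)) + v(x) is a real-analytic solution of Δu = a⁻¹·|∇u|² on U ∩ {x₁ > φ(x₂,…,x_n)}; in particular u blows up along Λ ∩ U. -/

import Mathlib

open Real Filter

/-- partial derivative in the `i`-th variable of a function of `x ∈ ℝⁿ` -/
noncomputable def pxs {n : ℕ} (i : Fin n) (u : (Fin n → ℝ) → ℝ) (x : Fin n → ℝ) : ℝ :=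
  deriv (fun y => u (Function.update x i y)) (x i)

/-! The substitution `u = -a log w` turns `Δu = a⁻¹ |∇u|²` into the Laplace equation `Δw = 0`. With
`τ = x₁ - φ`, it therefore suffices to find a harmonic `w = τ (1 + τ h)` with `h` analytic near `p`,
and to take `v = -a log (1 + τ h)`.

Such a `w` solves the Cauchy problem with data `w = 0` and normal derivative `1` on `{τ = 0}`, which
is noncharacteristic because `∇τ ≠ 0`. Instead of flattening the hypersurface we expand
`w = ∑ k, τ ^ k * c k`, where the `c k` are analytic functions of the full point `x`, `c 0 = 0` and
`c 1 = 1`; the equation is satisfied once `(k + 1) (k + 2) |∇τ|² c (k + 2)` is a given second order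
expression in `c k` plus `k + 1` times a first order one in `c (k + 1)`. Dividing by
`(k + 1) (k + 2)` exactly pays for the derivatives in Nagumo's norms, so `c k` grows at most
geometrically and the series converges where `τ` is small. -/

section

open scoped Topology

/-- Weighted `ℓ¹` norm on convergent power series: `f` is represented on the ball of radius `s`
around `p` by a power series `P` with `∑ ‖P m‖ s ^ m ≤ M`. Unlike the supremum norm on real balls,
this norm controls the derivatives on every smaller ball, as in Cauchy's estimates. -/
def AnalyticNormLE (𝕜 : Type*) {E F : Type*} [NontriviallyNormedField 𝕜] [NormedAddCommGroup E]
    [NormedSpace 𝕜 E] [NormedAddCommGroup F] [NormedSpace 𝕜 F] (f : E → F) (p : E) (s M : ℝ) :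
    Prop :=
  ∃ P : FormalMultilinearSeries 𝕜 E F, (Summable fun m => ‖P m‖ * s ^ m) ∧
    ∑' m, ‖P m‖ * s ^ m ≤ M ∧ HasFPowerSeriesOnBall f P p (ENNReal.ofReal s)

namespace AnalyticNormLE

section Basic

variable {𝕜 E F G : Type*} [NontriviallyNormedField 𝕜] [NormedAddCommGroup E] [NormedSpace 𝕜 E]
  [NormedAddCommGroup F] [NormedSpace 𝕜 F] [NormedAddCommGroup G] [NormedSpace 𝕜 G]
  {f g : E → F} {p : E} {s s' M N : ℝ}

theorem pos (hf : AnalyticNormLE 𝕜 f p s M) : 0 < s := by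
  obtain ⟨P, -, -, hfP⟩ := hf
  exact ENNReal.ofReal_pos.1 hfP.r_pos

theorem nonneg (hf : AnalyticNormLE 𝕜 f p s M) : 0 ≤ M := by
  have hs := hf.pos
  obtain ⟨P, -, hPM, -⟩ := hf
  exact (tsum_nonneg fun m => by positivity).trans hPM

theorem mem_eball_ofReal_of_norm_lt {y : E} (hy : ‖y‖ < s) :
    y ∈ Metric.eball 0 (ENNReal.ofReal s) := by
  rwa [Metric.eball_ofReal, mem_ball_zero_iff]

theorem norm_apply_diag_le {n : ℕ} (A : E [×n]→L[𝕜] F) {y : E} (hy : ‖y‖ ≤ s) :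
    ‖A fun _ => y‖ ≤ ‖A‖ * s ^ n := by
  simpa using A.le_opNorm_mul_prod_of_le fun _ => hy

theorem of_majorant {P : FormalMultilinearSeries 𝕜 E F} {a : ℕ → ℝ} (hs : 0 < s)
    (ha : Summable a) (hPa : ∀ m, ‖P m‖ * s ^ m ≤ a m) (haM : ∑' m, a m ≤ M)
    (hf : ∀ y, ‖y‖ < s → HasSum (fun m => P m fun _ => y) (f (p + y))) :
    AnalyticNormLE 𝕜 f p s M := by
  have hP : Summable fun m => ‖P m‖ * s ^ m := .of_nonneg_of_le (fun m => by positivity) hPa ha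
  refine ⟨P, hP, (hP.tsum_le_tsum hPa ha).trans haM, ?_, ENNReal.ofReal_pos.2 hs, fun {y} hy => ?_⟩
  · exact P.le_radius_of_summable (by simpa only [Real.coe_toNNReal _ hs.le] using hP)
  · rw [Metric.eball_ofReal, mem_ball_zero_iff] at hy
    exact hf y hy

theorem mono (hf : AnalyticNormLE 𝕜 f p s M) (hs' : 0 < s') (hss' : s' ≤ s) (hMN : M ≤ N) :
    AnalyticNormLE 𝕜 f p s' N := by
  obtain ⟨P, hP, hPM, hfP⟩ := hf
  exact of_majorant (a := fun m => ‖P m‖ * s ^ m) hs' hP (fun m => by gcongr) (hPM.trans hMN)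
    fun y hy => hfP.hasSum (mem_eball_ofReal_of_norm_lt (hy.trans_le hss'))

theorem congr (hf : AnalyticNormLE 𝕜 f p s M) (hfg : Set.EqOn f g (Metric.ball p s)) :
    AnalyticNormLE 𝕜 g p s M := by
  obtain ⟨P, hP, hPM, hfP⟩ := hf
  exact ⟨P, hP, hPM, hfP.congr (by rwa [Metric.eball_ofReal])⟩

theorem norm_apply_le (hf : AnalyticNormLE 𝕜 f p s M) {x : E} (hx : x ∈ Metric.ball p s) :
    ‖f x‖ ≤ M := by
  obtain ⟨P, hP, hPM, hfP⟩ := hf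
  have hxs : ‖x - p‖ < s := mem_ball_iff_norm.1 hx
  have hsum := hfP.hasSum (mem_eball_ofReal_of_norm_lt hxs)
  rw [add_sub_cancel] at hsum
  rw [← hsum.tsum_eq]
  exact (tsum_of_norm_bounded hP.hasSum fun m => norm_apply_diag_le (P m) hxs.le).trans hPM

theorem analyticAt [CompleteSpace F] (hf : AnalyticNormLE 𝕜 f p s M) {x : E}
    (hx : x ∈ Metric.ball p s) : AnalyticAt 𝕜 f x := by
  obtain ⟨P, -, -, hfP⟩ := hf
  exact hfP.analyticAt_of_mem (by rwa [Metric.eball_ofReal])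

theorem add (hf : AnalyticNormLE 𝕜 f p s M) (hg : AnalyticNormLE 𝕜 g p s N) :
    AnalyticNormLE 𝕜 (fun x => f x + g x) p s (M + N) := by
  have hs := hf.pos
  obtain ⟨P, hP, hPM, hfP⟩ := hf
  obtain ⟨Q, hQ, hQN, hgQ⟩ := hg
  refine of_majorant (P := P + Q) hs (hP.add hQ) (fun m => ?_) ?_ fun y hy =>
    (hfP.hasSum (mem_eball_ofReal_of_norm_lt hy)).add
      (hgQ.hasSum (mem_eball_ofReal_of_norm_lt hy))
  · rw [← add_mul]
    gcongr
    exact norm_add_le _ _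
  · rw [hP.tsum_add hQ]
    gcongr

theorem clm_comp (hf : AnalyticNormLE 𝕜 f p s M) (L : F →L[𝕜] G) :
    AnalyticNormLE 𝕜 (fun x => L (f x)) p s (‖L‖ * M) := by
  have hs := hf.pos
  obtain ⟨P, hP, hPM, hfP⟩ := hf
  refine of_majorant hs (hP.mul_left ‖L‖) (P := L.compFormalMultilinearSeries P)
    (fun m => ?_) ?_ fun y hy => L.hasSum (hfP.hasSum (mem_eball_ofReal_of_norm_lt hy))
  · rw [← mul_assoc]
    gcongr
    exact L.norm_compContinuousMultilinearMap_le (P m)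
  · rw [tsum_mul_left]
    gcongr

theorem of_multilinear (p : E) (hs : 0 < s) {n : ℕ} (A : E [×n]→L[𝕜] F) :
    AnalyticNormLE 𝕜 (fun x => A fun _ => x - p) p s (‖A‖ * s ^ n) := by
  let P : FormalMultilinearSeries 𝕜 E F := Pi.single (M := fun m => E [×m]→L[𝕜] F) n A
  have hPn : P n = A := Pi.single_eq_same (M := fun m => E [×m]→L[𝕜] F) n A
  have hPm (m : ℕ) (hm : m ≠ n) : P m = 0 :=
    Pi.single_eq_of_ne (M := fun m => E [×m]→L[𝕜] F) hm A
  have hsum : HasSum (fun m => ‖P m‖ * s ^ m) (‖A‖ * s ^ n) := by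
    rw [← hPn]
    exact hasSum_single n fun m hm => by rw [hPm m hm, norm_zero, zero_mul]
  refine of_majorant hs hsum.summable (fun m => le_rfl) hsum.tsum_eq.le fun y _ => ?_
  rw [add_sub_cancel_left, ← hPn]
  exact hasSum_single n fun m hm => by rw [hPm m hm, zero_apply]

theorem const (p : E) (hs : 0 < s) (c : F) : AnalyticNormLE 𝕜 (fun _ => c) p s ‖c‖ := by
  simpa using of_multilinear (n := 0) p hs (ContinuousMultilinearMap.constOfIsEmpty 𝕜 _ c)

theorem tsum [CompleteSpace F] {ι : Type*} {f : ι → E → F} {M : ι → ℝ} (hs : 0 < s)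
    (hf : ∀ i, AnalyticNormLE 𝕜 (f i) p s (M i)) (hM : Summable M) :
    AnalyticNormLE 𝕜 (fun x => ∑' i, f i x) p s (∑' i, M i) := by
  choose P hP hPM hfP using hf
  have hsum : Summable (Function.uncurry fun (m : ℕ) (i : ι) => ‖P i m‖ * s ^ m) := by
    refine ((summable_prod_of_nonneg (f := fun q : ι × ℕ => ‖P q.1 q.2‖ * s ^ q.2)
      fun q => by positivity).2 ⟨hP, ?_⟩).prod_symm
    exact .of_nonneg_of_le (fun i => tsum_nonneg fun m => by positivity) hPM hM
  have hcol (m : ℕ) : Summable fun i => ‖P i m‖ :=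
    (summable_mul_right_iff (pow_pos hs m).ne').1 (hsum.prod_factor m)
  refine of_majorant (P := fun m => ∑' i, P i m) (a := fun m => ∑' i, ‖P i m‖ * s ^ m) hs
    hsum.prod (fun m => ?_) ?_ fun y hy => ?_
  · rw [tsum_mul_right]
    gcongr
    exact norm_tsum_le_tsum_norm (hcol m)
  · rw [← hsum.tsum_comm]
    exact hsum.prod_symm.prod.tsum_le_tsum hPM hM
  · have hsum_y : Summable (Function.uncurry fun (m : ℕ) (i : ι) => P i m fun _ => y) :=
      .of_norm_bounded hsum fun q => norm_apply_diag_le (P q.2 q.1) hy.le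
    have htsum_apply (m : ℕ) : (∑' i, P i m) (fun _ => y) = ∑' i, P i m fun _ => y :=
      (ContinuousMultilinearMap.apply 𝕜 (fun _ : Fin m => E) F fun _ => y).map_tsum (hcol m).of_norm
    have hrow (i : ι) : ∑' m, (P i m fun _ => y) = f i (p + y) :=
      ((hfP i).hasSum (mem_eball_ofReal_of_norm_lt hy)).tsum_eq
    simp only [htsum_apply, ← hrow]
    rw [hsum_y.tsum_comm]
    exact hsum_y.prod.hasSum

theorem sum {ι : Type*} (t : Finset ι) {f : ι → E → F} {M : ι → ℝ} (hs : 0 < s)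
    (hf : ∀ i ∈ t, AnalyticNormLE 𝕜 (f i) p s (M i)) :
    AnalyticNormLE 𝕜 (fun x => ∑ i ∈ t, f i x) p s (∑ i ∈ t, M i) := by
  classical
  induction t using Finset.induction_on with
  | empty => simpa using const p hs (0 : F)
  | insert i t hi ih =>
    simp only [Finset.sum_insert hi]
    exact add (hf i (t.mem_insert_self i)) (ih fun j hj => hf j (Finset.mem_insert_of_mem hj))

theorem exists_multilinear_smul {m n : ℕ} (A : E [×m]→L[𝕜] 𝕜) (B : E [×n]→L[𝕜] F) :
    ∃ C : E [×m + n]→L[𝕜] F,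
      ‖C‖ ≤ ‖A‖ * ‖B‖ ∧ ∀ y, (C fun _ => y) = (A fun _ => y) • B fun _ => y := by
  refine ⟨(A.smulRight B).uncurrySum.domDomCongr finSumFinEquiv, ?_, fun y => ?_⟩
  · rw [ContinuousMultilinearMap.norm_domDomCongr, ← ContinuousMultilinearMap.norm_smulRight]
    exact MultilinearMap.mkContinuous_norm_le _ (norm_nonneg _) _
  · simp [Function.comp_def]

theorem smul [CompleteSpace F] {f : E → 𝕜} (hf : AnalyticNormLE 𝕜 f p s M)
    (hg : AnalyticNormLE 𝕜 g p s N) :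
    AnalyticNormLE 𝕜 (fun x => f x • g x) p s (M * N) := by
  have hs := hf.pos
  have hM := hf.nonneg
  obtain ⟨P, hP, hPM, hfP⟩ := hf
  obtain ⟨Q, hQ, hQN, hgQ⟩ := hg
  have hterm (q : ℕ × ℕ) : AnalyticNormLE 𝕜
      (fun x => (P q.1 fun _ => x - p) • Q q.2 fun _ => x - p) p s
      ((‖P q.1‖ * s ^ q.1) * (‖Q q.2‖ * s ^ q.2)) := by
    obtain ⟨C, hC, hCapply⟩ := exists_multilinear_smul (P q.1) (Q q.2)
    simp only [← hCapply]
    refine (of_multilinear p hs C).mono hs le_rfl ?_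
    calc ‖C‖ * s ^ (q.1 + q.2) ≤ ‖P q.1‖ * ‖Q q.2‖ * s ^ (q.1 + q.2) := by gcongr
      _ = ‖P q.1‖ * s ^ q.1 * (‖Q q.2‖ * s ^ q.2) := by ring
  have hsum := hP.mul_of_nonneg hQ (fun m => by positivity) (fun m => by positivity)
  refine ((tsum hs hterm hsum).mono hs le_rfl ?_).congr fun x hx => ?_
  · rw [← hP.tsum_mul_tsum hQ hsum]
    exact mul_le_mul hPM hQN (tsum_nonneg fun m => by positivity) hM
  · have hxs : ‖x - p‖ < s := mem_ball_iff_norm.1 hx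
    have hf_sum := hfP.hasSum (mem_eball_ofReal_of_norm_lt hxs)
    have hg_sum := hgQ.hasSum (mem_eball_ofReal_of_norm_lt hxs)
    rw [add_sub_cancel] at hf_sum hg_sum
    refine (hf_sum.smul hg_sum (.of_norm_bounded hsum fun q => ?_)).tsum_eq
    rw [norm_smul]
    gcongr <;> exact norm_apply_diag_le _ hxs.le

theorem mul [CompleteSpace 𝕜] {f g : E → 𝕜} (hf : AnalyticNormLE 𝕜 f p s M)
    (hg : AnalyticNormLE 𝕜 g p s N) : AnalyticNormLE 𝕜 (fun x => f x * g x) p s (M * N) :=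
  hf.smul hg

theorem pow [CompleteSpace 𝕜] {f : E → 𝕜} (hf : AnalyticNormLE 𝕜 f p s M) (k : ℕ) :
    AnalyticNormLE 𝕜 (fun x => f x ^ k) p s (M ^ k) := by
  induction k with
  | zero => simpa using const p hf.pos (1 : 𝕜)
  | succ k ih => simpa only [pow_succ] using ih.mul hf

theorem norm_derivSeries_le (P : FormalMultilinearSeries 𝕜 E F) (m : ℕ) :
    ‖P.derivSeries m‖ ≤ (m + 1) * ‖P (m + 1)‖ := by
  have hcurry : ‖P.derivSeries m‖ ≤ ‖P.changeOriginSeries 1 m‖ :=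
    (ContinuousLinearMap.norm_compContinuousMultilinearMap_le _ _).trans <|
      mul_le_of_le_one_left (norm_nonneg _)
        (continuousMultilinearCurryFin1 𝕜 E F).toLinearIsometry.norm_toContinuousLinearMap_le
  have hcard : Fintype.card {s : Finset (Fin (1 + m)) // s.card = m} = m + 1 := by
    rw [Fintype.card_finset_len, Fintype.card_fin, add_comm 1 m, Nat.choose_succ_self_right]
  have hseries : ‖P.changeOriginSeries 1 m‖₊ ≤ (m + 1) * ‖P (1 + m)‖₊ := by
    simpa [tsum_fintype, hcard] using P.nnnorm_changeOriginSeries_le_tsum 1 m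
  rw [add_comm 1 m] at hseries
  exact hcurry.trans (mod_cast hseries)

theorem succ_mul_pow_mul_sub_le (hs : 0 ≤ s) (hss' : s ≤ s') (m : ℕ) :
    (m + 1) * s ^ m * (s' - s) ≤ s' ^ (m + 1) := by
  induction m with
  | zero => simpa using hs
  | succ m ih =>
    calc ((m + 1 : ℕ) + 1) * s ^ (m + 1) * (s' - s)
        = s * ((m + 1) * s ^ m * (s' - s)) + s ^ (m + 1) * (s' - s) := by push_cast; ring
      _ ≤ s * s' ^ (m + 1) + s' ^ (m + 1) * (s' - s) := by
        have := sub_nonneg.2 hss'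
        gcongr
      _ = s' ^ (m + 1 + 1) := by ring

theorem fderiv [CompleteSpace F] (hf : AnalyticNormLE 𝕜 f p s' M) (hs : 0 < s) (hss' : s < s') :
    AnalyticNormLE 𝕜 (fderiv 𝕜 f) p s (M / (s' - s)) := by
  obtain ⟨P, hP, hPM, hfP⟩ := hf
  have hd : 0 < s' - s := sub_pos.2 hss'
  have hs' : 0 < s' := hs.trans hss'
  have htail : ∑' m, ‖P (m + 1)‖ * s' ^ (m + 1) ≤ M := by
    rw [hP.tsum_eq_zero_add] at hPM
    exact (le_add_of_nonneg_left (by positivity)).trans hPM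
  refine of_majorant (P := P.derivSeries) hs
    (((summable_nat_add_iff 1).2 hP).div_const (s' - s)) (fun m => ?_) ?_ fun y hy =>
      hfP.fderiv.hasSum (mem_eball_ofReal_of_norm_lt (hy.trans hss'))
  · rw [le_div_iff₀ hd]
    calc ‖P.derivSeries m‖ * s ^ m * (s' - s)
        ≤ (m + 1) * ‖P (m + 1)‖ * s ^ m * (s' - s) := by
          gcongr
          exact norm_derivSeries_le P m
      _ = ‖P (m + 1)‖ * ((m + 1) * s ^ m * (s' - s)) := by ring
      _ ≤ ‖P (m + 1)‖ * s' ^ (m + 1) := by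
        gcongr
        exact succ_mul_pow_mul_sub_le hs.le hss'.le m
  · rw [tsum_div_const]
    gcongr

theorem eventually_of_analyticAt (hf : AnalyticAt 𝕜 f p) :
    ∀ᶠ M in atTop, ∀ᶠ s in 𝓝[>] 0, AnalyticNormLE 𝕜 f p s M := by
  obtain ⟨P, r, hfP⟩ := hf
  obtain ⟨s, hs0, hsr⟩ := ENNReal.lt_iff_exists_nnreal_btwn.1 hfP.r_pos
  have hs : AnalyticNormLE 𝕜 f p s (∑' m, ‖P m‖ * s ^ m) :=
    ⟨P, P.summable_norm_mul_pow (hsr.trans_le hfP.r_le), le_rfl, by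
      simpa using hfP.mono hs0 hsr.le⟩
  filter_upwards [eventually_ge_atTop _] with M hM
  filter_upwards [Ioc_mem_nhdsGT hs.pos] with t ht using hs.mono ht.1 ht.2 hM

theorem of_apply_eq_zero (hf : AnalyticNormLE 𝕜 f p s M) (hfp : f p = 0) (hs' : 0 < s')
    (hss' : s' ≤ s) : AnalyticNormLE 𝕜 f p s' (s' / s * M) := by
  have hs := hf.pos
  obtain ⟨P, hP, hPM, hfP⟩ := hf
  have hP0 : P 0 = 0 := by
    ext v
    rw [hfP.coeff_zero, hfp, zero_apply]
  refine of_majorant hs' (hP.mul_left (s' / s)) (fun m => ?_) ?_ fun y hy =>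
    hfP.hasSum (mem_eball_ofReal_of_norm_lt (hy.trans_le hss'))
  · rcases m with _ | m
    · simp [hP0]
    · calc ‖P (m + 1)‖ * s' ^ (m + 1) = s' / s * (‖P (m + 1)‖ * (s * s' ^ m)) := by
            rw [pow_succ']; field_simp
        _ ≤ s' / s * (‖P (m + 1)‖ * (s * s ^ m)) := by gcongr
        _ = s' / s * (‖P (m + 1)‖ * s ^ (m + 1)) := by rw [pow_succ']
  · rw [tsum_mul_left]
    gcongr

theorem eventually_of_apply_eq_zero (hf : AnalyticAt 𝕜 f p) (hfp : f p = 0) {θ : ℝ} (hθ : 0 < θ) :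
    ∀ᶠ s in 𝓝[>] 0, AnalyticNormLE 𝕜 f p s θ := by
  obtain ⟨M, s, hs⟩ := ((eventually_of_analyticAt hf).mono fun _ h => h.exists).exists
  have hsmall : ∀ᶠ t in 𝓝[>] 0, t / s * M < θ := by
    refine (Tendsto.mono_left ?_ nhdsWithin_le_nhds).eventually_lt_const hθ
    simpa using ((tendsto_id (α := ℝ) (x := 𝓝 0)).div_const s).mul_const M
  filter_upwards [hsmall, Ioc_mem_nhdsGT hs.pos] with t htθ ht
  exact (hs.of_apply_eq_zero hfp ht.1 ht.2).mono ht.1 le_rfl htθ.le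

end Basic

section RCLike

variable {𝕜 E F : Type*} [RCLike 𝕜] [NormedAddCommGroup E] [NormedSpace 𝕜 E]
  [NormedAddCommGroup F] [NormedSpace 𝕜 F] [CompleteSpace F] {p x : E} {s : ℝ}

theorem hasSum_fderiv {ι : Type*} {f : ι → E → F} {M : ι → ℝ}
    (hf : ∀ i, AnalyticNormLE 𝕜 (f i) p s (M i)) (hM : Summable M) (hx : x ∈ Metric.ball p s) :
    HasSum (fun i => _root_.fderiv 𝕜 (f i) x) (_root_.fderiv 𝕜 (fun y => ∑' i, f i y) x) := by
  obtain ⟨t, hxt, hts⟩ := exists_between (Metric.mem_ball.1 hx)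
  have ht : 0 < t := dist_nonneg.trans_lt hxt
  let _ : NormedSpace ℝ E := NormedSpace.restrictScalars ℝ 𝕜 E
  have hbound (i : ι) (y : E) (hy : y ∈ Metric.ball p t) :
      ‖_root_.fderiv 𝕜 (f i) y‖ ≤ M i / (s - t) := ((hf i).fderiv ht hts).norm_apply_le hy
  have hbound_summable : Summable fun i => M i / (s - t) := hM.div_const _
  have hderiv (i : ι) (y : E) (hy : y ∈ Metric.ball p t) :
      HasFDerivAt (f i) (_root_.fderiv 𝕜 (f i) y) y :=
    ((hf i).analyticAt (Metric.ball_subset_ball hts.le hy)).differentiableAt.hasFDerivAt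
  have hsummable : Summable fun i => f i p :=
    .of_norm_bounded hM fun i =>
      (hf i).norm_apply_le (Metric.mem_ball_self (ht.trans hts))
  rw [(hasFDerivAt_tsum_of_isPreconnected hbound_summable Metric.isOpen_ball
    Metric.isPreconnected_ball hderiv hbound (Metric.mem_ball_self ht) hsummable hxt).fderiv]
  exact (Summable.of_norm_bounded hbound_summable fun i => hbound i x hxt).hasSum

end RCLike

end AnalyticNormLE

section DifferentialOperators

variable {𝕜 E ι : Type*} [NontriviallyNormedField 𝕜] [NormedAddCommGroup E] [NormedSpace 𝕜 E]
  [Fintype ι]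

/-- The derivative of `f` in the direction `v`, as a function of the base point. -/
noncomputable def dirDeriv (v : E) (f : E → 𝕜) (x : E) : 𝕜 := fderiv 𝕜 f x v

/-- The second order operator `∑ i, ∂ᵢ²`, where `∂ᵢ` is the derivative along `e i`. It is the
Laplacian when `e` is an orthonormal basis, but `e` may be any finite family. -/
noncomputable def laplacianAlong (e : ι → E) (f : E → 𝕜) (x : E) : 𝕜 :=
  ∑ i, dirDeriv (e i) (dirDeriv (e i) f) x

/-- The bilinear gradient product `∑ i, ∂ᵢ f * ∂ᵢ g`, where `∂ᵢ` is the derivative along `e i`. -/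
noncomputable def gradInnerAlong (e : ι → E) (f g : E → 𝕜) (x : E) : 𝕜 :=
  ∑ i, dirDeriv (e i) f x * dirDeriv (e i) g x

/-- The first order operator `c ↦ 2 ∇τ · ∇c + (Δτ) c`, the coefficient of `k τ ^ (k - 1)` in
`Δ (τ ^ k c)`. -/
noncomputable def transportAlong (e : ι → E) (τ c : E → 𝕜) (x : E) : 𝕜 :=
  2 * gradInnerAlong e τ c x + laplacianAlong e τ x * c x

variable {f g : E → 𝕜} {x : E} (e : ι → E)

theorem dirDeriv_congr (v : E) (hfg : f =ᶠ[𝓝 x] g) : dirDeriv v f =ᶠ[𝓝 x] dirDeriv v g :=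
  hfg.fderiv.mono fun _ hy => congrArg (fun L : E →L[𝕜] 𝕜 => L v) hy

theorem dirDeriv_add (v : E) (hf : DifferentiableAt 𝕜 f x) (hg : DifferentiableAt 𝕜 g x) :
    dirDeriv v (fun y => f y + g y) x = dirDeriv v f x + dirDeriv v g x := by
  simp [dirDeriv, fderiv_fun_add hf hg]

theorem dirDeriv_mul (v : E) (hf : DifferentiableAt 𝕜 f x) (hg : DifferentiableAt 𝕜 g x) :
    dirDeriv v (fun y => f y * g y) x = f x * dirDeriv v g x + g x * dirDeriv v f x := by
  simp [dirDeriv, fderiv_fun_mul hf hg]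

theorem dirDeriv_comp {φ : 𝕜 → 𝕜} (v : E) (hφ : DifferentiableAt 𝕜 φ (f x))
    (hf : DifferentiableAt 𝕜 f x) :
    dirDeriv v (fun y => φ (f y)) x = deriv φ (f x) * dirDeriv v f x := by
  have hcomp : HasFDerivAt (fun y => φ (f y)) (deriv φ (f x) • fderiv 𝕜 f x) x :=
    hφ.hasDerivAt.comp_hasFDerivAt x hf.hasFDerivAt
  simp [dirDeriv, hcomp.fderiv]

theorem eventually_differentiableAt (hf : ContDiffAt 𝕜 2 f x) :
    ∀ᶠ y in 𝓝 x, DifferentiableAt 𝕜 f y :=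
  (hf.eventually (by simp)).mono fun _ hy => hy.differentiableAt two_ne_zero

theorem differentiableAt_dirDeriv (v : E) (hf : ContDiffAt 𝕜 2 f x) :
    DifferentiableAt 𝕜 (dirDeriv v f) x :=
  ((hf.fderiv_right (m := 1) (by norm_num)).differentiableAt one_ne_zero).clm_apply
    (differentiableAt_const v)

theorem analyticAt_dirDeriv [CompleteSpace 𝕜] (v : E) (hf : AnalyticAt 𝕜 f x) :
    AnalyticAt 𝕜 (dirDeriv v f) x :=
  ((ContinuousLinearMap.apply 𝕜 𝕜 v).analyticAt _).comp hf.fderiv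

theorem analyticAt_laplacianAlong [CompleteSpace 𝕜] (hf : AnalyticAt 𝕜 f x) :
    AnalyticAt 𝕜 (laplacianAlong e f) x :=
  Finset.univ.analyticAt_fun_sum fun _ _ => analyticAt_dirDeriv _ (analyticAt_dirDeriv _ hf)

theorem analyticAt_gradInnerAlong [CompleteSpace 𝕜] (hf : AnalyticAt 𝕜 f x)
    (hg : AnalyticAt 𝕜 g x) : AnalyticAt 𝕜 (gradInnerAlong e f g) x :=
  Finset.univ.analyticAt_fun_sum fun _ _ =>
    (analyticAt_dirDeriv _ hf).mul (analyticAt_dirDeriv _ hg)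

theorem laplacianAlong_congr (hfg : f =ᶠ[𝓝 x] g) :
    laplacianAlong e f x = laplacianAlong e g x :=
  Finset.sum_congr rfl fun _ _ => (dirDeriv_congr _ (dirDeriv_congr _ hfg)).self_of_nhds

theorem gradInnerAlong_congr {f' g' : E → 𝕜} (hf : f =ᶠ[𝓝 x] f') (hg : g =ᶠ[𝓝 x] g') :
    gradInnerAlong e f g x = gradInnerAlong e f' g' x :=
  Finset.sum_congr rfl fun i _ => by
    rw [(dirDeriv_congr (e i) hf).self_of_nhds, (dirDeriv_congr (e i) hg).self_of_nhds]

theorem gradInnerAlong_comp_left {φ : 𝕜 → 𝕜} (hφ : DifferentiableAt 𝕜 φ (f x))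
    (hf : DifferentiableAt 𝕜 f x) :
    gradInnerAlong e (fun y => φ (f y)) g x = deriv φ (f x) * gradInnerAlong e f g x := by
  simp only [gradInnerAlong, dirDeriv_comp _ hφ hf, Finset.mul_sum, mul_assoc]

theorem gradInnerAlong_comm : gradInnerAlong e f g x = gradInnerAlong e g f x := by
  simp only [gradInnerAlong, mul_comm]

theorem laplacianAlong_mul (hf : ContDiffAt 𝕜 2 f x) (hg : ContDiffAt 𝕜 2 g x) :
    laplacianAlong e (fun y => f y * g y) x =
      f x * laplacianAlong e g x + 2 * gradInnerAlong e f g x + g x * laplacianAlong e f x := by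
  have hterm (i : ι) : dirDeriv (e i) (dirDeriv (e i) fun y => f y * g y) x =
      f x * dirDeriv (e i) (dirDeriv (e i) g) x + 2 * (dirDeriv (e i) f x * dirDeriv (e i) g x) +
        g x * dirDeriv (e i) (dirDeriv (e i) f) x := by
    have hfirst : dirDeriv (e i) (fun y => f y * g y) =ᶠ[𝓝 x]
        fun y => f y * dirDeriv (e i) g y + g y * dirDeriv (e i) f y := by
      filter_upwards [eventually_differentiableAt hf, eventually_differentiableAt hg]
        with y hfy hgy using dirDeriv_mul _ hfy hgy
    have hf₁ := hf.differentiableAt two_ne_zero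
    have hg₁ := hg.differentiableAt two_ne_zero
    have hf₂ := differentiableAt_dirDeriv (e i) hf
    have hg₂ := differentiableAt_dirDeriv (e i) hg
    rw [(dirDeriv_congr _ hfirst).self_of_nhds,
      dirDeriv_add _ (hf₁.fun_mul hg₂) (hg₁.fun_mul hf₂), dirDeriv_mul _ hf₁ hg₂,
      dirDeriv_mul _ hg₁ hf₂]
    ring
  simp only [laplacianAlong, gradInnerAlong, hterm, Finset.sum_add_distrib, Finset.mul_sum]

theorem laplacianAlong_comp {φ : 𝕜 → 𝕜} (hφ : ContDiffAt 𝕜 2 φ (f x)) (hf : ContDiffAt 𝕜 2 f x) :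
    laplacianAlong e (fun y => φ (f y)) x =
      deriv φ (f x) * laplacianAlong e f x +
        deriv (deriv φ) (f x) * gradInnerAlong e f f x := by
  have hφ' : ∀ᶠ y in 𝓝 x, DifferentiableAt 𝕜 φ (f y) :=
    hf.continuousAt.eventually (eventually_differentiableAt hφ)
  have hf₁ := hf.differentiableAt two_ne_zero
  have hφ₂ : DifferentiableAt 𝕜 (deriv φ) (f x) := differentiableAt_dirDeriv 1 hφ
  have hterm (i : ι) : dirDeriv (e i) (dirDeriv (e i) fun y => φ (f y)) x =
      deriv φ (f x) * dirDeriv (e i) (dirDeriv (e i) f) x +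
        deriv (deriv φ) (f x) * (dirDeriv (e i) f x * dirDeriv (e i) f x) := by
    have hfirst : dirDeriv (e i) (fun y => φ (f y)) =ᶠ[𝓝 x]
        fun y => deriv φ (f y) * dirDeriv (e i) f y := by
      filter_upwards [eventually_differentiableAt hf, hφ'] with y hfy hφy
        using dirDeriv_comp _ hφy hfy
    have hcomp : DifferentiableAt 𝕜 (fun y => deriv φ (f y)) x := hφ₂.comp x hf₁
    rw [(dirDeriv_congr _ hfirst).self_of_nhds,
      dirDeriv_mul _ hcomp (differentiableAt_dirDeriv _ hf), dirDeriv_comp _ hφ₂ hf₁]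
    ring
  simp only [laplacianAlong, gradInnerAlong, hterm, Finset.sum_add_distrib, Finset.mul_sum]

theorem laplacianAlong_pow_mul {τ c : E → 𝕜} (hτ : ContDiffAt 𝕜 2 τ x) (hc : ContDiffAt 𝕜 2 c x)
    (k : ℕ) :
    laplacianAlong e (fun y => τ y ^ (k + 2) * c y) x =
      (k + 2) * (k + 1) * τ x ^ k * (gradInnerAlong e τ τ x * c x) +
        (k + 2) * τ x ^ (k + 1) * transportAlong e τ c x +
        τ x ^ (k + 2) * laplacianAlong e c x := by
  have hpow : ContDiffAt 𝕜 2 (fun t : 𝕜 => t ^ (k + 2)) (τ x) := contDiffAt_id.pow _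
  have hderiv : deriv (fun t : 𝕜 => t ^ (k + 2)) = fun t : 𝕜 => (k + 2) * t ^ (k + 1) := by
    ext t
    simp
  have hderiv₂ : deriv (deriv fun t : 𝕜 => t ^ (k + 2)) (τ x) =
      (k + 2) * ((k + 1) * τ x ^ k) := by
    simp [hderiv]
  rw [laplacianAlong_mul e (hτ.pow _) hc, laplacianAlong_comp e hpow hτ, hderiv₂,
    gradInnerAlong_comp_left e (hpow.differentiableAt two_ne_zero)
      (hτ.differentiableAt two_ne_zero), hderiv, transportAlong]
  ring

end DifferentialOperators

section RCLike

variable {𝕜 E ι : Type*} [RCLike 𝕜] [NormedAddCommGroup E] [NormedSpace 𝕜 E] [Fintype ι]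

theorem AnalyticNormLE.dirDeriv {f : E → 𝕜} {p : E} {s s' M : ℝ} (v : E)
    (hf : AnalyticNormLE 𝕜 f p s' M) (hs : 0 < s) (hss' : s < s') :
    AnalyticNormLE 𝕜 (dirDeriv v f) p s (‖v‖ * (M / (s' - s))) := by
  have hfderiv := hf.fderiv hs hss'
  have hnorm : ‖ContinuousLinearMap.apply 𝕜 𝕜 v‖ ≤ ‖v‖ :=
    ContinuousLinearMap.opNorm_le_bound _ (norm_nonneg v) fun A =>
      (A.le_opNorm v).trans_eq (mul_comm _ _)
  exact (hfderiv.clm_comp (ContinuousLinearMap.apply 𝕜 𝕜 v)).mono hs le_rfl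
    (mul_le_mul_of_nonneg_right hnorm hfderiv.nonneg)

/-- Nagumo's family of norms: `f` has norm at most `K / (R - s) ^ q` on each ball of radius
`s < R` around `p`. A derivative raises `q` by one at the cost of a factor `4 (q + 1)`, with no
loss of radius. -/
def NagumoLE (f : E → 𝕜) (p : E) (R : ℝ) (q : ℕ) (K : ℝ) : Prop :=
  ∀ s ∈ Set.Ioo 0 R, AnalyticNormLE 𝕜 f p s (K / (R - s) ^ q)

namespace NagumoLE

variable {f g τ : E → 𝕜} {p : E} {R B K L : ℝ} {q : ℕ}

theorem of_analyticNormLE (hf : AnalyticNormLE 𝕜 f p R K) : NagumoLE f p R 0 K :=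
  fun s hs => hf.mono hs.1 hs.2.le (by simp)

theorem mono (hf : NagumoLE f p R q K) (hKL : K ≤ L) : NagumoLE f p R q L := by
  intro s hs
  have hd : 0 < R - s := sub_pos.2 hs.2
  exact (hf s hs).mono hs.1 le_rfl (by gcongr)

theorem nonneg (hf : NagumoLE f p R q K) (hR : 0 < R) : 0 ≤ K := by
  have hs : R / 2 ∈ Set.Ioo 0 R := ⟨half_pos hR, half_lt_self hR⟩
  have hd : 0 < (R - R / 2) ^ q := pow_pos (sub_pos.2 hs.2) q
  simpa [div_mul_cancel₀ _ hd.ne'] using mul_nonneg (hf _ hs).nonneg hd.le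

theorem succ (hf : NagumoLE f p R q K) (hR : R ≤ 1) : NagumoLE f p R (q + 1) K := by
  intro s hs
  have hd : 0 < R - s := sub_pos.2 hs.2
  have hd' : R - s ≤ 1 := by linarith [hs.1]
  have hK := hf.nonneg (hs.1.trans hs.2)
  refine (hf s hs).mono hs.1 le_rfl (div_le_div_of_nonneg_left hK (pow_pos hd _) ?_)
  exact pow_le_pow_of_le_one hd.le hd' q.le_succ

theorem add (hf : NagumoLE f p R q K) (hg : NagumoLE g p R q L) :
    NagumoLE (fun x => f x + g x) p R q (K + L) := by
  intro s hs
  rw [add_div]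
  exact (hf s hs).add (hg s hs)

theorem sum {f : ι → E → 𝕜} {K : ι → ℝ} (hf : ∀ i, NagumoLE (f i) p R q (K i)) :
    NagumoLE (fun x => ∑ i, f i x) p R q (∑ i, K i) := by
  intro s hs
  rw [Finset.sum_div]
  exact .sum _ hs.1 fun i _ => hf i s hs

theorem mul_left (hg : AnalyticNormLE 𝕜 g p R B) (hf : NagumoLE f p R q K) :
    NagumoLE (fun x => g x * f x) p R q (B * K) := by
  intro s hs
  rw [mul_div_assoc]
  exact (hg.mono hs.1 hs.2.le le_rfl).mul (hf s hs)

theorem const_mul (c : 𝕜) (hf : NagumoLE f p R q K) :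
    NagumoLE (fun x => c * f x) p R q (‖c‖ * K) := by
  intro s hs
  rw [mul_div_assoc]
  exact (AnalyticNormLE.const p hs.1 c).mul (hf s hs)

theorem half_le_one_sub_inv_pow (q : ℕ) : 1 / 2 ≤ (1 - 1 / (2 * ((q : ℝ) + 1))) ^ q := by
  have hq : 1 / (2 * ((q : ℝ) + 1)) ≤ 1 / 2 := by
    gcongr
    linarith [q.cast_nonneg (α := ℝ)]
  calc 1 / 2 ≤ 1 + q * (-(1 / (2 * ((q : ℝ) + 1)))) := by
        field_simp
        linarith
    _ ≤ (1 + -(1 / (2 * ((q : ℝ) + 1)))) ^ q := one_add_mul_le_pow (by linarith) q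
    _ = (1 - 1 / (2 * ((q : ℝ) + 1))) ^ q := by rw [sub_eq_add_neg]

theorem dirDeriv (v : E) (hf : NagumoLE f p R q K) :
    NagumoLE (dirDeriv v f) p R (q + 1) (4 * (q + 1) * ‖v‖ * K) := by
  intro s hs
  have hd : 0 < R - s := sub_pos.2 hs.2
  have hK := hf.nonneg (hs.1.trans hs.2)
  -- Moving outwards by a fraction `ε` of order `1 / q` keeps `(1 - ε) ^ q` bounded below.
  set ε : ℝ := 1 / (2 * (q + 1)) with hε
  have hε0 : 0 < ε := by positivity
  have hpow : 1 / 2 ≤ (1 - ε) ^ q := half_le_one_sub_inv_pow q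
  set s' := s + (R - s) * ε with hs'
  have hRs' : R - s' = (R - s) * (1 - ε) := by rw [hs']; ring
  have hε1 : ε < 1 := by
    rw [hε, div_lt_one (by positivity)]
    linarith [q.cast_nonneg (α := ℝ)]
  have hss' : s < s' := lt_add_of_pos_right s (mul_pos hd hε0)
  have hs'R : s' < R := sub_pos.1 (hRs' ▸ mul_pos hd (sub_pos.2 hε1))
  refine ((hf s' ⟨hs.1.trans hss', hs'R⟩).dirDeriv v hs.1 hss').mono hs.1 le_rfl ?_
  calc ‖v‖ * (K / (R - s') ^ q / (s' - s))
      ≤ ‖v‖ * (K / ((R - s) ^ q * (1 / 2)) / ((R - s) * ε)) := by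
        rw [hRs', mul_pow, hs', add_sub_cancel_left]
        gcongr
    _ = 4 * (q + 1) * ‖v‖ * K / (R - s) ^ (q + 1) := by
        rw [hε]
        field_simp
        ring

theorem laplacianAlong (e : ι → E) (hf : NagumoLE f p R q K) :
    NagumoLE (laplacianAlong e f) p R (q + 2)
      ((q + 1) * (q + 2) * (16 * ∑ i, ‖e i‖ ^ 2) * K) := by
  refine (sum fun i => (hf.dirDeriv (e i)).dirDeriv (e i)).mono (le_of_eq ?_)
  simp only [Finset.mul_sum, Finset.sum_mul]
  refine Finset.sum_congr rfl fun i _ => ?_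
  push_cast
  ring

theorem transportAlong (e : ι → E) (hR : R ≤ 1)
    (hτ : ∀ i, AnalyticNormLE 𝕜 (_root_.dirDeriv (e i) τ) p R B)
    (hΔτ : AnalyticNormLE 𝕜 (_root_.laplacianAlong e τ) p R B) (hf : NagumoLE f p R q K) :
    NagumoLE (transportAlong e τ f) p R (q + 1) ((q + 1) * (8 * (∑ i, ‖e i‖) * B + B) * K) := by
  have hB := hΔτ.nonneg
  have hK := hf.nonneg hΔτ.pos
  have hgrad := sum fun i => mul_left (hτ i) (hf.dirDeriv (e i))
  refine ((hgrad.const_mul 2).add (mul_left hΔτ (hf.succ hR))).mono ?_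
  have hsum : ∑ i, B * (4 * (q + 1) * ‖e i‖ * K) = 4 * (q + 1) * (∑ i, ‖e i‖) * B * K := by
    simp only [Finset.mul_sum, Finset.sum_mul]
    exact Finset.sum_congr rfl fun i _ => by ring
  rw [hsum, RCLike.norm_ofNat]
  linarith [mul_nonneg q.cast_nonneg (mul_nonneg hB hK)]

end NagumoLE

section RecursiveCoefficients

variable (e : ι → E) (τ f₀ f₁ : E → 𝕜) {p x : E} {B R : ℝ}

/-- The coefficients of the formal solution `w = ∑ k, τ ^ k * c k` of `Δ w = 0` with Cauchy data
`f₀`, `f₁` on `{τ = 0}`, where `c` depends on the base point: collecting the factors of `τ ^ k` in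
`Δ w` leads to `(k + 1) (k + 2) |∇τ|² c (k + 2) + (k + 1) T (c (k + 1)) + Δ (c k) = 0`,
with `T = transportAlong e τ`. -/
noncomputable def cauchyCoeff : ℕ → E → 𝕜
  | 0 => f₀
  | 1 => f₁
  | k + 2 => fun x => -((k + 1) * (k + 2) : 𝕜)⁻¹ * ((gradInnerAlong e τ τ x)⁻¹ *
      ((k + 1) * transportAlong e τ (cauchyCoeff (k + 1)) x + laplacianAlong e (cauchyCoeff k) x))

variable {f₀ f₁ τ}

theorem cauchyCoeff_recursion (hx : gradInnerAlong e τ τ x ≠ 0) (k : ℕ) :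
    (k + 1) * (k + 2) * (gradInnerAlong e τ τ x * cauchyCoeff e τ f₀ f₁ (k + 2) x) +
      (k + 1) * transportAlong e τ (cauchyCoeff e τ f₀ f₁ (k + 1)) x +
      laplacianAlong e (cauchyCoeff e τ f₀ f₁ k) x = 0 := by
  have hk₁ : (k + 1 : 𝕜) ≠ 0 := mod_cast k.succ_ne_zero
  have hk₂ : (k + 2 : 𝕜) ≠ 0 := mod_cast (k + 1).succ_ne_zero
  rw [cauchyCoeff]
  field_simp
  ring

theorem nagumoLE_cauchyCoeff (hR : R ≤ 1) (hf₀ : AnalyticNormLE 𝕜 f₀ p R B)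
    (hf₁ : AnalyticNormLE 𝕜 f₁ p R B)
    (hG : AnalyticNormLE 𝕜 (fun x => (gradInnerAlong e τ τ x)⁻¹) p R B)
    (hτ : ∀ i, AnalyticNormLE 𝕜 (dirDeriv (e i) τ) p R B)
    (hΔτ : AnalyticNormLE 𝕜 (laplacianAlong e τ) p R B) {A : ℝ} (hA : 1 ≤ A)
    (hBA : B * ((8 * (∑ i, ‖e i‖) * B + B) + 16 * ∑ i, ‖e i‖ ^ 2) ≤ A) :
    ∀ k, NagumoLE (cauchyCoeff e τ f₀ f₁ k) p R k (B * A ^ k)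
  | 0 => by simpa [cauchyCoeff] using NagumoLE.of_analyticNormLE hf₀
  | 1 => by
    have hB : B ≤ B * A ^ 1 := by simpa using le_mul_of_one_le_right hf₁.nonneg hA
    simpa only [cauchyCoeff] using ((NagumoLE.of_analyticNormLE hf₁).succ hR).mono hB
  | k + 2 => by
    have hT := (nagumoLE_cauchyCoeff hR hf₀ hf₁ hG hτ hΔτ hA hBA (k + 1)).transportAlong e hR hτ hΔτ
    have hΔ := (nagumoLE_cauchyCoeff hR hf₀ hf₁ hG hτ hΔτ hA hBA k).laplacianAlong e
    refine (((hT.const_mul (k + 1 : 𝕜)).add hΔ).mul_left hG |>.const_mul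
      (-((k + 1) * (k + 2) : 𝕜)⁻¹)).mono ?_
    have hk₁ : ‖(k + 1 : 𝕜)‖ = k + 1 := mod_cast RCLike.norm_natCast (K := 𝕜) (k + 1)
    have hk₂ : ‖(k + 2 : 𝕜)‖ = k + 2 := mod_cast RCLike.norm_natCast (K := 𝕜) (k + 2)
    rw [norm_neg, norm_inv, norm_mul, hk₁, hk₂]
    set C₁ := 8 * (∑ i, ‖e i‖) * B + B
    set C₂ := 16 * ∑ i, ‖e i‖ ^ 2
    have hB := hf₀.nonneg
    calc ((k + 1) * (k + 2) : ℝ)⁻¹ * (B * ((k + 1) * (((k + 1 : ℕ) + 1) * C₁ * (B * A ^ (k + 1))) +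
            (k + 1) * (k + 2) * C₂ * (B * A ^ k)))
        = B * (C₁ * A + C₂ * 1) * (B * A ^ k) := by
          push_cast
          field_simp
          ring
      _ ≤ B * (C₁ * A + C₂ * A) * (B * A ^ k) := by gcongr
      _ = B * (C₁ + C₂) * (B * A ^ (k + 1)) := by ring
      _ ≤ A * (B * A ^ (k + 1)) := by gcongr
      _ = B * A ^ (k + 2) := by ring

theorem exists_analyticNormLE_cauchyCoeff (hτ : AnalyticAt 𝕜 τ p) (hf₀ : AnalyticAt 𝕜 f₀ p)
    (hf₁ : AnalyticAt 𝕜 f₁ p) (hG : gradInnerAlong e τ τ p ≠ 0) :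
    ∃ C ρ : ℝ, 0 < ρ ∧
      ∀ᶠ r in 𝓝[>] 0, ∀ k, AnalyticNormLE 𝕜 (cauchyCoeff e τ f₀ f₁ k) p r (C * ρ ^ k) := by
  have hdτ := eventually_all.2 fun i =>
    AnalyticNormLE.eventually_of_analyticAt (analyticAt_dirDeriv (e i) hτ)
  obtain ⟨B, hB₀, hB₁, hBG, hBτ, hBΔ⟩ := ((AnalyticNormLE.eventually_of_analyticAt hf₀).and <|
    (AnalyticNormLE.eventually_of_analyticAt hf₁).and <|
    (AnalyticNormLE.eventually_of_analyticAt ((analyticAt_gradInnerAlong e hτ hτ).inv hG)).and <|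
    hdτ.and <| AnalyticNormLE.eventually_of_analyticAt (analyticAt_laplacianAlong e hτ)).exists
  obtain ⟨R, hR₀, hR₁, hRG, hRτ, hRΔ, hR⟩ := (hB₀.and <| hB₁.and <| hBG.and <|
    (eventually_all.2 hBτ).and <| hBΔ.and <| Ioc_mem_nhdsGT one_pos).exists
  set A := max 1 (B * ((8 * (∑ i, ‖e i‖) * B + B) + 16 * ∑ i, ‖e i‖ ^ 2))
  have hA : 1 ≤ A := le_max_left _ _
  refine ⟨B, A / (R / 2), div_pos (one_pos.trans_le hA) (half_pos hR.1), ?_⟩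
  filter_upwards [Ioc_mem_nhdsGT (half_pos hR.1)] with r hr k
  have hB := hR₀.nonneg
  have hR_pos := hR.1
  have hr_half : R / 2 ≤ R - r := by linarith [hr.2]
  refine (nagumoLE_cauchyCoeff e hR.2 hR₀ hR₁ hRG hRτ hRΔ hA (le_max_right _ _) k r
    ⟨hr.1, by linarith [hr.2]⟩).mono hr.1 le_rfl ?_
  calc B * A ^ k / (R - r) ^ k ≤ B * A ^ k / (R / 2) ^ k := by gcongr
    _ = B * (A / (R / 2)) ^ k := by rw [div_pow A, mul_div_assoc]

end RecursiveCoefficients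

section CauchyKovalevskaya

theorem AnalyticNormLE.hasSum_dirDeriv {κ : Type*} {f : κ → E → 𝕜} {p x : E} {s : ℝ} {M : κ → ℝ}
    (v : E) (hf : ∀ i, AnalyticNormLE 𝕜 (f i) p s (M i)) (hM : Summable M)
    (hx : x ∈ Metric.ball p s) :
    HasSum (fun i => _root_.dirDeriv v (f i) x) (_root_.dirDeriv v (fun y => ∑' i, f i y) x) :=
  (ContinuousLinearMap.apply 𝕜 𝕜 v).hasSum (AnalyticNormLE.hasSum_fderiv hf hM hx)

theorem AnalyticNormLE.hasSum_laplacianAlong {κ : Type*} {f : κ → E → 𝕜} {p x : E} {s : ℝ}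
    {M : κ → ℝ} (e : ι → E) (hf : ∀ i, AnalyticNormLE 𝕜 (f i) p s (M i)) (hM : Summable M)
    (hx : x ∈ Metric.ball p s) :
    HasSum (fun i => laplacianAlong e (f i) x) (laplacianAlong e (fun y => ∑' i, f i y) x) := by
  obtain ⟨t, hxt, hts⟩ := exists_between (Metric.mem_ball.1 hx)
  have ht : 0 < t := dist_nonneg.trans_lt hxt
  refine hasSum_sum fun i _ => ?_
  have hfirst : _root_.dirDeriv (e i) (fun y => ∑' k, f k y) =ᶠ[𝓝 x]
      fun y => ∑' k, _root_.dirDeriv (e i) (f k) y := by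
    filter_upwards [Metric.isOpen_ball.mem_nhds hx] with y hy
      using (hasSum_dirDeriv (e i) hf hM hy).tsum_eq.symm
  rw [(dirDeriv_congr (e i) hfirst).self_of_nhds]
  exact hasSum_dirDeriv (e i) (fun k => (hf k).dirDeriv (e i) ht hts)
    ((hM.div_const (s - t)).mul_left ‖e i‖) hxt

variable (e : ι → E) {τ : E → 𝕜} {c : ℕ → E → 𝕜} {p x : E} {C ρ : ℝ}

theorem sum_range_laplacianAlong_pow_mul (hτ : ContDiffAt 𝕜 2 τ x)
    (hc : ∀ k, ContDiffAt 𝕜 2 (c k) x)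
    (hrec : ∀ k : ℕ, (k + 1) * (k + 2) * (gradInnerAlong e τ τ x * c (k + 2) x) +
      (k + 1) * transportAlong e τ (c (k + 1)) x + laplacianAlong e (c k) x = 0) (m : ℕ) :
    ∑ k ∈ Finset.range (m + 2), laplacianAlong e (fun y => τ y ^ k * c k y) x =
      (m + 1) * τ x ^ m * transportAlong e τ (c (m + 1)) x +
        τ x ^ (m + 1) * laplacianAlong e (c (m + 1)) x + τ x ^ m * laplacianAlong e (c m) x := by
  induction m with
  | zero =>
    simp only [zero_add, Finset.sum_range_succ, Finset.range_one, Finset.sum_singleton, pow_zero,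
      one_mul, pow_one, laplacianAlong_mul e hτ (hc 1), Nat.cast_zero, mul_one, transportAlong]
    ring
  | succ m ih =>
    rw [Finset.sum_range_succ, ih, laplacianAlong_pow_mul e hτ (hc _)]
    push_cast
    linear_combination τ x ^ m * hrec m

theorem tendsto_pow_mul_pow_mul_zero {a : ℕ → 𝕜} {t : 𝕜} (ha : ∀ k, ‖a k‖ ≤ C * ρ ^ k)
    (hρ : 0 ≤ ρ) (ht : ‖t‖ * ρ < 1) (j : ℕ) :
    Tendsto (fun m : ℕ => (m : 𝕜) ^ j * t ^ m * a m) atTop (𝓝 0) := by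
  have ht₀ : 0 ≤ ‖t‖ * ρ := by positivity
  have hlim := (tendsto_pow_const_mul_const_pow_of_abs_lt_one j
    (abs_lt.2 ⟨by linarith, ht⟩)).const_mul C
  rw [mul_zero] at hlim
  refine squeeze_zero_norm (fun m => ?_) hlim
  rw [norm_mul, norm_mul, norm_pow, norm_pow, RCLike.norm_natCast]
  calc (m : ℝ) ^ j * ‖t‖ ^ m * ‖a m‖ ≤ (m : ℝ) ^ j * ‖t‖ ^ m * (C * ρ ^ m) := by
        gcongr
        exact ha m
    _ = C * ((m : ℝ) ^ j * (‖t‖ * ρ) ^ m) := by ring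

theorem eventually_analyticNormLE_pow_mul (hρ : 0 < ρ)
    (hc : ∀ᶠ r in 𝓝[>] 0, ∀ k, AnalyticNormLE 𝕜 (c k) p r (C * ρ ^ k)) (hτ : AnalyticAt 𝕜 τ p)
    (hτp : τ p = 0) :
    ∀ᶠ r in 𝓝[>] 0, ∀ k, AnalyticNormLE 𝕜 (fun y => τ y ^ k * c k y) p r (C * (1 / 2) ^ k) := by
  filter_upwards [hc, AnalyticNormLE.eventually_of_apply_eq_zero hτ hτp
    (show 0 < 1 / 2 / ρ by positivity)] with r hcr hτr k
  refine ((hτr.pow k).mul (hcr k)).mono hτr.pos le_rfl (le_of_eq ?_)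
  rw [mul_left_comm, ← mul_pow, div_mul_cancel₀ _ hρ.ne']

theorem exists_norm_transportAlong_laplacianAlong_le (hτ : AnalyticAt 𝕜 τ p)
    (hc : ∀ᶠ r in 𝓝[>] 0, ∀ k, AnalyticNormLE 𝕜 (c k) p r (C * ρ ^ k)) :
    ∃ D, ∀ᶠ x in 𝓝 p, ∀ k,
      ‖transportAlong e τ (c k) x‖ ≤ D * ρ ^ k ∧ ‖laplacianAlong e (c k) x‖ ≤ D * ρ ^ k := by
  have hdτ := eventually_all.2 fun i =>
    AnalyticNormLE.eventually_of_analyticAt (analyticAt_dirDeriv (e i) hτ)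
  obtain ⟨B, hBτ, hBΔ⟩ := (hdτ.and <|
    AnalyticNormLE.eventually_of_analyticAt (analyticAt_laplacianAlong e hτ)).exists
  obtain ⟨R, hRc, hRτ, hRΔ, hR⟩ := (hc.and <| (eventually_all.2 hBτ).and <| hBΔ.and <|
    Ioc_mem_nhdsGT one_pos).exists
  have hs : R / 2 ∈ Set.Ioo 0 R := ⟨half_pos hR.1, half_lt_self hR.1⟩
  set T : ℝ := 8 * (∑ i, ‖e i‖) * B + B
  set N : ℝ := 16 * ∑ i, ‖e i‖ ^ 2
  refine ⟨max (T / (R / 2)) (2 * N / (R / 2) ^ 2) * C, ?_⟩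
  filter_upwards [Metric.ball_mem_nhds p hs.1] with x hx k
  have hck := NagumoLE.of_analyticNormLE (hRc k)
  have hK := (hRc k).nonneg
  constructor
  · calc ‖transportAlong e τ (c k) x‖ ≤ (0 + 1) * T * (C * ρ ^ k) / (R - R / 2) ^ (0 + 1) :=
        mod_cast (hck.transportAlong e hR.2 hRτ hRΔ _ hs).norm_apply_le hx
      _ = T / (R / 2) * (C * ρ ^ k) := by ring
      _ ≤ _ := (mul_le_mul_of_nonneg_right (le_max_left _ _) hK).trans_eq (mul_assoc _ _ _).symm
  · calc ‖laplacianAlong e (c k) x‖ ≤ (0 + 1) * (0 + 2) * N * (C * ρ ^ k) / (R - R / 2) ^ (0 + 2) :=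
        mod_cast (hck.laplacianAlong e _ hs).norm_apply_le hx
      _ = 2 * N / (R / 2) ^ 2 * (C * ρ ^ k) := by rw [sub_half]; ring
      _ ≤ _ := (mul_le_mul_of_nonneg_right (le_max_right _ _) hK).trans_eq (mul_assoc _ _ _).symm

theorem laplacianAlong_tsum_pow_mul_eq_zero (hτ : AnalyticAt 𝕜 τ p) (hτp : τ p = 0) (hρ : 0 < ρ)
    (hc : ∀ᶠ r in 𝓝[>] 0, ∀ k, AnalyticNormLE 𝕜 (c k) p r (C * ρ ^ k))
    (hrec : ∀ᶠ x in 𝓝 p, ∀ k : ℕ, (k + 1) * (k + 2) * (gradInnerAlong e τ τ x * c (k + 2) x) +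
      (k + 1) * transportAlong e τ (c (k + 1)) x + laplacianAlong e (c k) x = 0) :
    ∀ᶠ x in 𝓝 p, laplacianAlong e (fun y => ∑' k, τ y ^ k * c k y) x = 0 := by
  obtain ⟨D, hD⟩ := exists_norm_transportAlong_laplacianAlong_le e hτ hc
  obtain ⟨r, hcr, hFr⟩ := (hc.and (eventually_analyticNormLE_pow_mul hρ hc hτ hτp)).exists
  have hsmall : ∀ᶠ x in 𝓝 p, ‖τ x‖ * ρ < 1 :=
    (hτ.continuousAt.norm.mul_const ρ).eventually_lt_const (by simp [hτp])
  filter_upwards [hD, hrec, hsmall, hτ.eventually_analyticAt, Metric.ball_mem_nhds p (hcr 0).pos]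
    with x hDx hrecx hτρ hτx hx
  have hpartial := sum_range_laplacianAlong_pow_mul e hτx.contDiffAt
    (fun k => ((hcr k).analyticAt hx).contDiffAt) hrecx
  have hsum := AnalyticNormLE.hasSum_laplacianAlong e hFr (summable_geometric_two.mul_left C) hx
  have hlim := hsum.tendsto_sum_nat.comp (tendsto_add_atTop_nat 2)
  simp only [Function.comp_def, hpartial] at hlim
  refine tendsto_nhds_unique hlim ?_
  have hshift {a : ℕ → 𝕜} (ha : ∀ k, ‖a k‖ ≤ D * ρ ^ k) (k : ℕ) : ‖a (k + 1)‖ ≤ D * ρ * ρ ^ k :=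
    (ha (k + 1)).trans_eq (by ring)
  have hT := hshift fun k => (hDx k).1
  have hΔ := hshift fun k => (hDx k).2
  have hterms := (((tendsto_pow_mul_pow_mul_zero hT hρ.le hτρ 1).add
    (tendsto_pow_mul_pow_mul_zero hT hρ.le hτρ 0)).add
    ((tendsto_pow_mul_pow_mul_zero hΔ hρ.le hτρ 0).const_mul (τ x))).add
    (tendsto_pow_mul_pow_mul_zero (fun k => (hDx k).2) hρ.le hτρ 0)
  simp only [mul_zero, add_zero] at hterms
  exact hterms.congr fun m => by ring

theorem exists_laplacianAlong_eq_zero_of_cauchyData {f₀ f₁ : E → 𝕜} (hτ : AnalyticAt 𝕜 τ p)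
    (hτp : τ p = 0) (hG : gradInnerAlong e τ τ p ≠ 0) (hf₀ : AnalyticAt 𝕜 f₀ p)
    (hf₁ : AnalyticAt 𝕜 f₁ p) :
    ∃ h : E → 𝕜, AnalyticAt 𝕜 h p ∧
      ∀ᶠ x in 𝓝 p, laplacianAlong e (fun y => f₀ y + τ y * f₁ y + τ y ^ 2 * h y) x = 0 := by
  obtain ⟨C, ρ, hρ, hc⟩ := exists_analyticNormLE_cauchyCoeff e hτ hf₀ hf₁ hG
  set c := cauchyCoeff e τ f₀ f₁
  have hc_shift : ∀ᶠ r in 𝓝[>] 0, ∀ k, AnalyticNormLE 𝕜 (c (k + 2)) p r (C * ρ ^ 2 * ρ ^ k) :=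
    hc.mono fun r hr k => by simpa only [pow_add, mul_assoc, mul_comm (ρ ^ k)] using hr (k + 2)
  obtain ⟨r, hFr, hHr⟩ := ((eventually_analyticNormLE_pow_mul hρ hc hτ hτp).and
    (eventually_analyticNormLE_pow_mul hρ hc_shift hτ hτp)).exists
  have hr := (hFr 0).pos
  refine ⟨fun y => ∑' k, τ y ^ k * c (k + 2) y, (AnalyticNormLE.tsum hr hHr
    (summable_geometric_two.mul_left _)).analyticAt (Metric.mem_ball_self hr), ?_⟩
  have hG_ne := (analyticAt_gradInnerAlong e hτ hτ).continuousAt.eventually_ne hG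
  have hharm := laplacianAlong_tsum_pow_mul_eq_zero e hτ hτp hρ hc
    (hG_ne.mono fun x hx => cauchyCoeff_recursion e hx)
  filter_upwards [hharm, Metric.ball_mem_nhds p hr] with x hx hxr
  rw [← hx]
  refine laplacianAlong_congr e ?_
  filter_upwards [Metric.isOpen_ball.mem_nhds hxr] with y hy
  have hsummable : Summable fun k => τ y ^ k * c k y :=
    .of_norm_bounded (summable_geometric_two.mul_left C) fun k => (hFr k).norm_apply_le hy
  rw [← hsummable.sum_add_tsum_nat_add 2, ← tsum_mul_left]
  simp only [Finset.sum_range_succ, Finset.sum_range_zero, pow_add, mul_assoc, mul_left_comm]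
  simp [c, cauchyCoeff]

end CauchyKovalevskaya

end RCLike

section LogarithmicSingularities

variable {E ι : Type*} [NormedAddCommGroup E] [NormedSpace ℝ E] [Fintype ι] (e : ι → E)
  {a c : ℝ} {p x : E} {τ w : E → ℝ}

theorem gradInnerAlong_self_ne_zero {i : ι} (hi : dirDeriv (e i) τ x ≠ 0) :
    gradInnerAlong e τ τ x ≠ 0 :=
  (Finset.sum_pos' (fun j _ => mul_self_nonneg (dirDeriv (e j) τ x))
    ⟨i, Finset.mem_univ i, mul_self_pos.2 hi⟩).ne'

theorem laplacianAlong_neg_mul_log (ha : a ≠ 0) (hw : ContDiffAt ℝ 2 w x) (hwx : w x ≠ 0)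
    (hΔw : laplacianAlong e w x = 0) :
    laplacianAlong e (fun y => -a * log (w y)) x =
      a⁻¹ * gradInnerAlong e (fun y => -a * log (w y)) (fun y => -a * log (w y)) x := by
  have hφ : ContDiffAt ℝ 2 (fun t => -a * log t) (w x) :=
    contDiffAt_const.mul (contDiffAt_log.2 hwx)
  have hφ' : deriv (fun t => -a * log t) = fun t => -a * t⁻¹ := by
    simp only [deriv_const_mul_field', deriv_log']
  have hφ'' : deriv (deriv fun t => -a * log t) (w x) = a / w x ^ 2 := by
    rw [hφ', deriv_const_mul_field, deriv_inv]
    ring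
  have hφ₁ := hφ.differentiableAt two_ne_zero
  have hw₁ := hw.differentiableAt two_ne_zero
  rw [laplacianAlong_comp e hφ hw, hΔw, hφ'', gradInnerAlong_comp_left e hφ₁ hw₁,
    gradInnerAlong_comm e (f := w) (g := fun y => -a * log (w y)),
    gradInnerAlong_comp_left e hφ₁ hw₁, hφ']
  field_simp
  ring

theorem exists_neg_mul_log_add_solution (ha : a ≠ 0) (hτ : AnalyticAt ℝ τ p) (hτp : τ p = 0)
    (hG : gradInnerAlong e τ τ p ≠ 0) :
    ∃ v : E → ℝ, AnalyticAt ℝ v p ∧ ∀ᶠ x in 𝓝 p, τ x ≠ 0 →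
      laplacianAlong e (fun y => -a * log (τ y) + v y) x =
        a⁻¹ * gradInnerAlong e (fun y => -a * log (τ y) + v y)
          (fun y => -a * log (τ y) + v y) x := by
  obtain ⟨h, hh, hharm⟩ := exists_laplacianAlong_eq_zero_of_cauchyData e hτ hτp hG
    (analyticAt_const (v := 0)) (analyticAt_const (v := 1))
  set g : E → ℝ := fun y => 1 + τ y * h y with hg_def
  have hg : AnalyticAt ℝ g p := analyticAt_const.add (hτ.mul hh)
  have hgp : 0 < g p := by simp [hg_def, hτp]
  refine ⟨fun y => -a * log (g y), analyticAt_const.mul ((analyticAt_log hgp).comp hg), ?_⟩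
  filter_upwards [hharm, hτ.eventually_analyticAt, hg.eventually_analyticAt,
    hg.continuousAt.eventually_ne hgp.ne'] with x hΔ hτx hgx hgx_ne hτx_ne
  have hprod : (fun y => -a * log (τ y) + -a * log (g y)) =ᶠ[𝓝 x]
      fun y => -a * log (τ y * g y) := by
    filter_upwards [hτx.continuousAt.eventually_ne hτx_ne,
      hgx.continuousAt.eventually_ne hgx_ne] with y hτy hgy
    rw [log_mul hτy hgy, mul_add]
  rw [laplacianAlong_congr e hprod, gradInnerAlong_congr e hprod hprod]
  refine laplacianAlong_neg_mul_log e ha (hτx.mul hgx).contDiffAt (mul_ne_zero hτx_ne hgx_ne) ?_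
  rw [← hΔ]
  congr 1
  ext y
  simp only [hg_def]
  ring

theorem tendsto_abs_neg_mul_log_add_atTop {α : Type*} {l : Filter α} {f v : α → ℝ} (ha : a ≠ 0)
    (hf : Tendsto f l (𝓝[>] 0)) (hv : Tendsto v l (𝓝 c)) :
    Tendsto (fun x => |(-a * log (f x) + v x)|) l atTop := by
  have hlog : Tendsto (fun x => |a| * |log (f x)|) l atTop :=
    (tendsto_abs_atBot_atTop.comp (tendsto_log_nhdsGT_zero.comp hf)).const_mul_atTop
      (abs_pos.2 ha)
  refine tendsto_atTop_mono (fun x => ?_) (hlog.atTop_add hv.abs.neg)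
  rw [← abs_mul, ← abs_neg (a * _), ← neg_mul, ← sub_eq_add_neg, ← abs_neg (v x)]
  simpa using abs_sub_abs_le_abs_sub (-a * log (f x)) (-v x)

end LogarithmicSingularities

section Coordinates

variable {n : ℕ}

theorem pxs_eq_dirDeriv {u : (Fin n → ℝ) → ℝ} {x : Fin n → ℝ} (i : Fin n)
    (hu : DifferentiableAt ℝ u x) : pxs i u x = dirDeriv (Pi.single i 1) u x := by
  have hu' : HasFDerivAt u (fderiv ℝ u x) (Function.update x i (x i)) := by
    simpa only [Function.update_eq_self] using hu.hasFDerivAt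
  exact (hu'.comp_hasDerivAt (x i) (hasDerivAt_update x i (x i))).deriv

theorem sum_pxs_pxs_eq_laplacianAlong {u : (Fin n → ℝ) → ℝ} {x : Fin n → ℝ}
    (hu : ContDiffAt ℝ 2 u x) :
    ∑ i, pxs i (pxs i u) x = laplacianAlong (fun i => Pi.single i 1) u x := by
  refine Finset.sum_congr rfl fun i _ => ?_
  have hfirst : pxs i u =ᶠ[𝓝 x] dirDeriv (Pi.single i 1) u :=
    (eventually_differentiableAt hu).mono fun y hy => pxs_eq_dirDeriv i hy
  rw [pxs_eq_dirDeriv i ((differentiableAt_dirDeriv _ hu).congr_of_eventuallyEq hfirst),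
    (dirDeriv_congr _ hfirst).self_of_nhds]

theorem sum_pxs_sq_eq_gradInnerAlong {u : (Fin n → ℝ) → ℝ} {x : Fin n → ℝ}
    (hu : DifferentiableAt ℝ u x) :
    ∑ i, pxs i u x ^ 2 = gradInnerAlong (fun i => Pi.single i 1) u u x :=
  Finset.sum_congr rfl fun i _ => by rw [pxs_eq_dirDeriv i hu, sq]

variable {φ : (Fin n → ℝ) → ℝ} {x : Fin (n + 1) → ℝ}

theorem analyticAt_sub_comp_tail (hφ : AnalyticAt ℝ φ (Fin.tail x)) :
    AnalyticAt ℝ (fun y : Fin (n + 1) → ℝ => y 0 - φ (Fin.tail y)) x := by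
  let tail : (Fin (n + 1) → ℝ) →L[ℝ] Fin n → ℝ := .pi fun i => .proj i.succ
  exact ((ContinuousLinearMap.proj (R := ℝ) (φ := fun _ : Fin (n + 1) => ℝ) 0).analyticAt x).sub
    (hφ.comp (tail.analyticAt x))

theorem dirDeriv_single_zero_sub_comp_tail (hφ : AnalyticAt ℝ φ (Fin.tail x)) :
    dirDeriv (Pi.single 0 1) (fun y : Fin (n + 1) → ℝ => y 0 - φ (Fin.tail y)) x = 1 := by
  rw [← pxs_eq_dirDeriv 0 (analyticAt_sub_comp_tail hφ).differentiableAt, pxs]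
  simp [Fin.tail_update_zero]

theorem tendsto_sub_comp_tail_nhdsGT_zero (hφ : AnalyticAt ℝ φ (Fin.tail x))
    (hx : x 0 = φ (Fin.tail x)) :
    Tendsto (fun y : Fin (n + 1) → ℝ => y 0 - φ (Fin.tail y))
      (𝓝[{y | φ (Fin.tail y) < y 0}] x) (𝓝[>] 0) := by
  refine tendsto_nhdsWithin_iff.2
    ⟨?_, eventually_mem_nhdsWithin.mono fun y hy => Set.mem_Ioi.2 (sub_pos.2 hy)⟩
  rw [← sub_eq_zero.2 hx]
  exact (analyticAt_sub_comp_tail hφ).continuousAt.mono_left nhdsWithin_le_nhds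

end Coordinates

end

/-- Singular solutions of the elliptic equation `Δu = a⁻¹ |∇u|²` blowing up
logarithmically along the graph hypersurface `Λ = {x₁ = φ(x₂,…,xₙ)}`. -/
theorem stmt2 {n : ℕ} (a : ℝ) (ha : a ≠ 0)
    (V : Set (Fin n → ℝ)) (hV : IsOpen V)
    (φ : (Fin n → ℝ) → ℝ) (hφ : AnalyticOnNhd ℝ φ V)
    (p : Fin (n + 1) → ℝ) (hpV : Fin.tail p ∈ V) (hpΛ : p 0 = φ (Fin.tail p)) :
    ∃ U : Set (Fin (n + 1) → ℝ), IsOpen U ∧ p ∈ U ∧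
      U ⊆ {x | Fin.tail x ∈ V} ∧
      ∃ v : (Fin (n + 1) → ℝ) → ℝ, AnalyticOnNhd ℝ v U ∧
        (∀ x ∈ U, φ (Fin.tail x) < x 0 →
          ∑ i, pxs i (pxs i (fun y => -a * Real.log (y 0 - φ (Fin.tail y)) + v y)) x =
            a⁻¹ * ∑ i, (pxs i (fun y => -a * Real.log (y 0 - φ (Fin.tail y)) + v y) x) ^ 2) ∧
        (∀ q ∈ U, q 0 = φ (Fin.tail q) →
          Tendsto (fun x => |(-a * Real.log (x 0 - φ (Fin.tail x)) + v x)|)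
            (nhdsWithin q {x | φ (Fin.tail x) < x 0}) atTop) := by
  have hτp := analyticAt_sub_comp_tail (hφ _ hpV)
  have hG := gradInnerAlong_self_ne_zero (fun i => Pi.single i 1) (i := 0)
    (dirDeriv_single_zero_sub_comp_tail (hφ _ hpV) ▸ one_ne_zero)
  obtain ⟨v, hv, hsol⟩ := exists_neg_mul_log_add_solution _ ha hτp (sub_eq_zero.2 hpΛ) hG
  have htail : Continuous (Fin.tail : (Fin (n + 1) → ℝ) → Fin n → ℝ) := by fun_prop
  obtain ⟨U, hU, hU_open, hpU⟩ := eventually_nhds_iff.1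
    ((htail.continuousAt.eventually_mem (hV.mem_nhds hpV)).and
      (hv.eventually_analyticAt.and hsol))
  have hτ (x) (hx : x ∈ U) := analyticAt_sub_comp_tail (hφ _ (hU x hx).1)
  refine ⟨U, hU_open, hpU, fun x hx => (hU x hx).1, v, fun x hx => (hU x hx).2.1,
    fun x hx hφx => ?_, fun q hq hqΛ => ?_⟩
  · have hx_ne := (sub_pos.2 hφx).ne'
    have hu := (contDiffAt_const (c := -a).mul ((hτ x hx).contDiffAt.log hx_ne)).add
      (hU x hx).2.1.contDiffAt (n := 2)
    rw [sum_pxs_pxs_eq_laplacianAlong hu,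
      sum_pxs_sq_eq_gradInnerAlong (hu.differentiableAt two_ne_zero)]
    exact (hU x hx).2.2 hx_ne
  · exact tendsto_abs_neg_mul_log_add_atTop ha
      (tendsto_sub_comp_tail_nhdsGT_zero (hφ _ (hU q hq).1) hqΛ)
      ((hU q hq).2.1.continuousAt.mono_left nhdsWithin_le_nhds)
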